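/- The integral Z(s₁,s₂,s₃) = ∫_{ℤ_p²∖{xy(x−y)=0}} |x|_p^{s₁} |y|_p^{s₂} |x−y|_p^{s₃} dx dy converges absolutely and defines a holomorphic function of (s₁,s₂,s₃) on the open set { (s₁,s₂,s₃) ∈ ℂ³ : Re(sᵢ) > −1 for i = 1,2,3 and Re(s₁) + Re(s₂) + Re(s₃) > −2 }. -/

import Mathlib

open MeasureTheory Finset

noncomputable section

instance padicMS (p : ℕ) [Fact p.Prime] : MeasurableSpace ℚ_[p] := borel _
instance padicBS (p : ℕ) [Fact p.Prime] : BorelSpace ℚ_[p] := ⟨rfl⟩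

/-- The closed unit ball of `ℚ_[p]` (i.e. `ℤ_[p]`) as a positive compact subset. -/
def padicBall (p : ℕ) [Fact p.Prime] : TopologicalSpace.PositiveCompacts ℚ_[p] where
  carrier := Metric.closedBall 0 1
  isCompact' := isCompact_closedBall 0 1
  interior_nonempty' := ⟨0, Metric.ball_subset_interior_closedBall (Metric.mem_ball_self one_pos)⟩

/-- The Haar measure on `(ℚ_[p], +)`, normalized so that `ℤ_[p]` has measure `1`. -/
def padicHaar (p : ℕ) [Fact p.Prime] : Measure ℚ_[p] :=
  Measure.addHaarMeasure (padicBall p)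

instance padicHaarSF (p : ℕ) [Fact p.Prime] : SigmaFinite (padicHaar p) := by
  unfold padicHaar; infer_instance

/-- The product of normalized Haar measures on a finite power of `ℚ_[p]`. -/
def padicPi (p : ℕ) [Fact p.Prime] (ι : Type) [Fintype ι] : Measure (ι → ℚ_[p]) :=
  Measure.pi fun _ => padicHaar p

/-!
In an ultrametric space the two longest sides of the triangle with sides `x`, `y`, `x - y` have the
same length. So on each of the three pieces `|x| < |y|`, `|y| < |x|`, `|x| = |y|` the integrand has
absolute value `u ^ α * w ^ β`, where `u` is the shortest and `w` the longest side, `α` is the real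
part of the exponent of `u`, and `α + β` is the sum of all three real parts. As `u ≤ w`, lowering
`α` and raising `β` by the same amount only increases this, and `α + β > -2` makes room for both
exponents to exceed `-1`. Then the integral splits into a product of integrals of powers of a
single absolute value (after a shear, for the piece `|x| = |y|`), and these converge because the
ball of radius `r` has measure `O(r)`.
-/

open scoped NNReal ENNReal

section ParametricIntegral

lemma exists_add_sign_mem_of_isOpen {ι : Type*} [Finite ι] {U : Set (ι → ℂ)}
    (hU : IsOpen U) {v₀ : ι → ℂ} (hv₀ : v₀ ∈ U) :
    ∃ ε : ℝ, 0 < ε ∧ ∀ σ : ι → SignType, (fun i => v₀ i + 2 * ε * ((σ i : ℝ) : ℂ)) ∈ U := by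
  cases nonempty_fintype ι
  obtain ⟨δ, hδ, hball⟩ := Metric.isOpen_iff.1 hU v₀ hv₀
  refine ⟨δ / 3, by positivity, fun σ => hball ?_⟩
  rw [mem_ball_iff_norm, pi_norm_lt_iff hδ]
  intro i
  have hsign : |(σ i : ℝ)| ≤ 1 := by cases σ i <;> simp
  have hnorm : ‖(2 * (δ / 3 : ℝ) * ((σ i : ℝ) : ℂ) : ℂ)‖ = 2 * (δ / 3) * |(σ i : ℝ)| := by
    simp [abs_of_pos hδ]
  rw [Pi.sub_apply, add_sub_cancel_left, hnorm]
  nlinarith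

variable {ι Ω : Type*} [Fintype ι] [MeasurableSpace Ω] {μ : Measure Ω}

lemma sum_abs_mul_exp_sum_le {ε : ℝ} (hε : 0 < ε) (l : ι → ℝ) {a b : ι → ℝ}
    (hab : ∀ i, |b i - a i| ≤ ε) :
    (∑ i, |l i|) * Real.exp (∑ i, l i * b i) ≤
      ε⁻¹ * Real.exp (∑ i, l i * (a i + 2 * ε * SignType.sign (l i))) := by
  have hterm (i : ι) : ε * |l i| + l i * b i ≤ l i * (a i + 2 * ε * SignType.sign (l i)) := by
    have hdiff : l i * (b i - a i) ≤ |l i| * ε := by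
      refine (le_abs_self _).trans ?_
      rw [abs_mul]
      exact mul_le_mul_of_nonneg_left (hab i) (abs_nonneg _)
    linear_combination hdiff - 2 * ε * self_mul_sign (l i)
  have hlin : ∑ i, |l i| ≤ ε⁻¹ * Real.exp (ε * ∑ i, |l i|) := by
    rw [inv_mul_eq_div, le_div_iff₀' hε]
    linarith [Real.add_one_le_exp (ε * ∑ i, |l i|)]
  calc (∑ i, |l i|) * Real.exp (∑ i, l i * b i)
      ≤ ε⁻¹ * Real.exp (ε * ∑ i, |l i|) * Real.exp (∑ i, l i * b i) := by gcongr
    _ = ε⁻¹ * Real.exp (∑ i, (ε * |l i| + l i * b i)) := by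
        rw [mul_assoc, ← Real.exp_add, sum_add_distrib, mul_sum]
    _ ≤ ε⁻¹ * Real.exp (∑ i, l i * (a i + 2 * ε * SignType.sign (l i))) := by
        gcongr with i
        exact hterm i

lemma norm_sum_smul_proj_le (c : ι → ℂ) :
    ‖∑ i, c i • (ContinuousLinearMap.proj i : (ι → ℂ) →L[ℂ] ℂ)‖ ≤ ∑ i, ‖c i‖ := by
  refine ContinuousLinearMap.opNorm_le_bound _ (by positivity) fun w => ?_
  simp only [FunLike.coe_sum, FunLike.coe_smul, Finset.sum_apply,
    Pi.smul_apply, ContinuousLinearMap.proj_apply, smul_eq_mul, sum_mul]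
  refine norm_sum_le_of_le _ fun i _ => ?_
  rw [norm_mul]
  exact mul_le_mul_of_nonneg_left (norm_le_pi_norm w i) (norm_nonneg _)

lemma norm_cexp_sum_smul_le [DecidableEq ι] {ε : ℝ} (hε : 0 < ε) (l : ι → ℝ) {v₀ v : ι → ℂ}
    (hv : ‖v - v₀‖ ≤ ε) :
    ‖Complex.exp (∑ i, (l i : ℂ) * v i) •
        ∑ i, (l i : ℂ) • (ContinuousLinearMap.proj i : (ι → ℂ) →L[ℂ] ℂ)‖ ≤
      ∑ σ : ι → SignType,
        ε⁻¹ * ‖Complex.exp (∑ i, (l i : ℂ) * (v₀ i + 2 * ε * ((σ i : ℝ) : ℂ)))‖ := by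
  have hre (i : ι) : |(v i).re - (v₀ i).re| ≤ ε :=
    (Complex.abs_re_le_norm (v i - v₀ i)).trans ((norm_le_pi_norm (v - v₀) i).trans hv)
  calc ‖Complex.exp (∑ i, (l i : ℂ) * v i) •
        ∑ i, (l i : ℂ) • (ContinuousLinearMap.proj i : (ι → ℂ) →L[ℂ] ℂ)‖
      ≤ Real.exp (∑ i, l i * (v i).re) * ∑ i, ‖(l i : ℂ)‖ := by
        rw [norm_smul, Complex.norm_exp, Complex.re_sum]
        simp only [Complex.re_ofReal_mul]
        gcongr
        exact norm_sum_smul_proj_le _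
    _ = (∑ i, |l i|) * Real.exp (∑ i, l i * (v i).re) := by
        simp only [Complex.norm_real, Real.norm_eq_abs, mul_comm]
    _ ≤ ε⁻¹ * Real.exp (∑ i, l i * ((v₀ i).re + 2 * ε * SignType.sign (l i))) :=
        sum_abs_mul_exp_sum_le hε _ hre
    _ = ε⁻¹ * ‖Complex.exp (∑ i, (l i : ℂ) *
          (v₀ i + 2 * ε * ((SignType.sign (l i) : ℝ) : ℂ)))‖ := by
        simp [Complex.norm_exp]
    _ ≤ _ :=
        single_le_sum (f := fun σ : ι → SignType => ε⁻¹ *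
          ‖Complex.exp (∑ i, (l i : ℂ) * (v₀ i + 2 * ε * ((σ i : ℝ) : ℂ)))‖)
          (fun σ _ => by positivity) (mem_univ fun i => SignType.sign (l i))

/- Near `v₀` the derivative is dominated by `ε⁻¹` times the sum of the norms of the integrand at
the points `v₀ + 2εσ`, with `σ` ranging over sign vectors; integrability on `U` is therefore the
only domination hypothesis needed. -/
lemma differentiableOn_integral_cexp_sum {l : ι → Ω → ℝ} (hl : ∀ i, AEMeasurable (l i) μ)
    {U : Set (ι → ℂ)} (hU : IsOpen U)
    (hint : ∀ v ∈ U, Integrable (fun x => Complex.exp (∑ i, (l i x : ℂ) * v i)) μ) :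
    DifferentiableOn ℂ (fun v => ∫ x, Complex.exp (∑ i, (l i x : ℂ) * v i) ∂μ) U := by
  classical
  intro v₀ hv₀
  obtain ⟨ε, hε, hshift⟩ := exists_add_sign_mem_of_isOpen hU hv₀
  let L (x : Ω) : (ι → ℂ) →L[ℂ] ℂ := ∑ i, (l i x : ℂ) • ContinuousLinearMap.proj i
  have hL (x : Ω) (v : ι → ℂ) : L x v = ∑ i, (l i x : ℂ) * v i := by simp [L]
  have hLmeas : AEStronglyMeasurable L μ :=
    Finset.aestronglyMeasurable_fun_sum _ fun i _ =>
      (Complex.measurable_ofReal.comp_aemeasurable (hl i)).aestronglyMeasurable.smul_const _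
  have hmeas (v : ι → ℂ) :
      AEStronglyMeasurable (fun x => Complex.exp (∑ i, (l i x : ℂ) * v i)) μ :=
    AEMeasurable.aestronglyMeasurable (by fun_prop)
  have hbound := integrable_finsetSum univ fun σ (_ : σ ∈ univ) =>
    (hint _ (hshift σ)).norm.const_mul ε⁻¹
  have hderiv (x : Ω) (v : ι → ℂ) : HasFDerivAt (fun v => Complex.exp (∑ i, (l i x : ℂ) * v i))
      (Complex.exp (∑ i, (l i x : ℂ) * v i) • L x) v := by
    simpa only [hL] using (L x).hasFDerivAt (x := v) |>.cexp
  exact (hasFDerivAt_integral_of_dominated_of_fderiv_le (Metric.ball_mem_nhds v₀ hε)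
    (.of_forall hmeas) (hint v₀ hv₀) ((hmeas v₀).smul hLmeas)
    (.of_forall fun x v hv => norm_cexp_sum_smul_le hε _ (mem_ball_iff_norm.1 hv).le) hbound
    (.of_forall fun x v _ => hderiv x v)).differentiableAt.differentiableWithinAt

lemma differentiableOn_integral_prod_cpow {f : ι → Ω → ℝ} (hf : ∀ i, AEMeasurable (f i) μ)
    (hpos : ∀ᵐ x ∂μ, ∀ i, 0 < f i x) {U : Set (ι → ℂ)} (hU : IsOpen U)
    (hint : ∀ v ∈ U, Integrable (fun x => ∏ i, (f i x : ℂ) ^ v i) μ) :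
    DifferentiableOn ℂ (fun v => ∫ x, ∏ i, (f i x : ℂ) ^ v i ∂μ) U := by
  have hexp (v : ι → ℂ) : (fun x => ∏ i, (f i x : ℂ) ^ v i) =ᵐ[μ]
      fun x => Complex.exp (∑ i, (Real.log (f i x) : ℂ) * v i) := by
    filter_upwards [hpos] with x hx
    rw [Complex.exp_sum]
    refine prod_congr rfl fun i _ => ?_
    rw [Complex.cpow_def_of_ne_zero (Complex.ofReal_ne_zero.2 (hx i).ne'),
      Complex.ofReal_log (hx i).le]
  exact (differentiableOn_integral_cexp_sum (fun i => Real.measurable_log.comp_aemeasurable (hf i))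
    hU fun v hv => (hint v hv).congr (hexp v)).congr fun v _ => integral_congr_ae (hexp v)

end ParametricIntegral

section VolumeGrowth

variable {E : Type*} [NormedAddCommGroup E] {d α β : ℝ}

lemma setOf_le_norm_rpow_subset_closedBall {s : ℝ} (hα : α < 0) (hs : 0 < s) :
    {t : E | s ≤ ‖t‖ ^ α} ⊆ Metric.closedBall 0 (s ^ α⁻¹) := by
  intro t ht
  rcases eq_or_ne t 0 with rfl | ht₀
  · exact Metric.mem_closedBall_self (by positivity)
  · exact mem_closedBall_zero_iff.2
      ((Real.le_rpow_inv_iff_of_neg (norm_pos_iff.2 ht₀) hs hα).2 ht)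

variable [MeasurableSpace E] {μ : Measure E}

/-- Upper regularity of dimension `d` at the origin: the balls of radius `r ≤ 1` about `0` have
measure `O(r ^ d)`. For a Haar measure on a nonarchimedean local field with its normalized absolute
value, `d = 1`. -/
def UpperRegularAtZero (μ : Measure E) (d : ℝ) : Prop :=
  ∃ C : ℝ≥0, ∀ r : ℝ, 0 < r → r ≤ 1 → μ (Metric.closedBall 0 r) ≤ C * ENNReal.ofReal (r ^ d)

namespace UpperRegularAtZero

lemma measure_closedBall_lt_top (hμ : UpperRegularAtZero μ d) :
    μ (Metric.closedBall 0 1) < ∞ := by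
  obtain ⟨C, hC⟩ := hμ
  exact (hC 1 one_pos le_rfl).trans_lt (by simp)

lemma lintegral_measure_le_norm_rpow_lt_top (hμ : UpperRegularAtZero μ d) (hα : α < 0)
    (hdα : -d < α) : ∫⁻ s in Set.Ioi (1 : ℝ), μ {t | s ≤ ‖t‖ ^ α} < ∞ := by
  obtain ⟨C, hC⟩ := hμ
  have hexp : α⁻¹ * d < -1 := by
    rw [inv_mul_eq_div, div_lt_iff_of_neg hα]
    linarith
  have hle (s : ℝ) (hs : s ∈ Set.Ioi (1 : ℝ)) :
      μ {t | s ≤ ‖t‖ ^ α} ≤ C * ENNReal.ofReal (s ^ (α⁻¹ * d)) := by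
    have hs₀ : 0 < s := one_pos.trans hs
    rw [Real.rpow_mul hs₀.le]
    exact (measure_mono (setOf_le_norm_rpow_subset_closedBall hα hs₀)).trans <|
      hC _ (by positivity) (Real.rpow_le_one_of_one_le_of_nonpos hs.le (inv_neg''.2 hα).le)
  calc ∫⁻ s in Set.Ioi (1 : ℝ), μ {t | s ≤ ‖t‖ ^ α}
      ≤ ∫⁻ s in Set.Ioi (1 : ℝ), C * ENNReal.ofReal (s ^ (α⁻¹ * d)) :=
        setLIntegral_mono' measurableSet_Ioi hle
    _ = C * ∫⁻ s in Set.Ioi (1 : ℝ), ENNReal.ofReal (s ^ (α⁻¹ * d)) :=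
        lintegral_const_mul _ (by fun_prop)
    _ < ∞ := ENNReal.mul_lt_top ENNReal.coe_lt_top
        (integrableOn_Ioi_rpow_of_lt hexp one_pos).lintegral_lt_top

lemma integrableOn_norm_rpow [OpensMeasurableSpace E] (hμ : UpperRegularAtZero μ d)
    (hdα : -d < α) : IntegrableOn (fun t : E => ‖t‖ ^ α) (Metric.closedBall 0 1) μ := by
  have hmeas : Measurable fun t : E => ‖t‖ ^ α := measurable_norm.pow_const α
  rcases le_or_gt 0 α with hα | hα
  · refine Measure.integrableOn_of_bounded (M := 1) hμ.measure_closedBall_lt_top.ne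
      hmeas.aestronglyMeasurable ?_
    filter_upwards [ae_restrict_mem measurableSet_closedBall] with t ht
    rw [Real.norm_of_nonneg (by positivity)]
    exact Real.rpow_le_one (norm_nonneg t) (mem_closedBall_zero_iff.1 ht) hα
  · have hnonneg : 0 ≤ᵐ[μ.restrict (Metric.closedBall 0 1)] fun t : E => ‖t‖ ^ α :=
      .of_forall fun t => by positivity
    refine ⟨hmeas.aestronglyMeasurable, (hasFiniteIntegral_iff_ofReal hnonneg).2 ?_⟩
    rw [lintegral_eq_lintegral_meas_le _ hnonneg hmeas.aemeasurable,
      ← Set.Ioc_union_Ioi_eq_Ioi zero_le_one]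
    refine (lintegral_union_le _ _ _).trans_lt (ENNReal.add_lt_top.2 ⟨?_, ?_⟩)
    · calc ∫⁻ s in Set.Ioc (0 : ℝ) 1, μ.restrict (Metric.closedBall 0 1) {t | s ≤ ‖t‖ ^ α}
          ≤ ∫⁻ _ in Set.Ioc (0 : ℝ) 1, μ (Metric.closedBall 0 1) :=
            lintegral_mono fun s => Measure.restrict_apply_univ (μ := μ) _ ▸
              measure_mono (Set.subset_univ _)
        _ < ∞ := by simpa using hμ.measure_closedBall_lt_top
    · exact (lintegral_mono fun s => Measure.restrict_apply_le _ _).trans_lt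
        (hμ.lintegral_measure_le_norm_rpow_lt_top hα hdα)

lemma integrableOn_norm_fst_rpow_mul_norm_snd_rpow [OpensMeasurableSpace E] [SFinite μ]
    (hμ : UpperRegularAtZero μ d) (hα : -d < α) (hβ : -d < β) :
    IntegrableOn (fun x : E × E => ‖x.1‖ ^ α * ‖x.2‖ ^ β)
      (Metric.closedBall 0 1 ×ˢ Metric.closedBall 0 1) (μ.prod μ) := by
  rw [IntegrableOn, ← Measure.prod_restrict]
  exact (hμ.integrableOn_norm_rpow hα).mul_prod (hμ.integrableOn_norm_rpow hβ)

/- The shear `(x, y) ↦ (x - y, y)` preserves the measure and, by the ultrametric inequality, the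
unit polydisc. -/
lemma integrableOn_norm_sub_rpow_mul_norm_snd_rpow [BorelSpace E] [SecondCountableTopology E]
    [IsUltrametricDist E] [SFinite μ] [μ.IsAddRightInvariant] (hμ : UpperRegularAtZero μ d)
    (hα : -d < α) (hβ : -d < β) :
    IntegrableOn (fun x : E × E => ‖x.1 - x.2‖ ^ α * ‖x.2‖ ^ β)
      (Metric.closedBall 0 1 ×ˢ Metric.closedBall 0 1) (μ.prod μ) := by
  have hpre : (fun x : E × E => (x.1 - x.2, x.2)) ⁻¹'
      (Metric.closedBall 0 1 ×ˢ Metric.closedBall 0 1) =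
        Metric.closedBall 0 1 ×ˢ Metric.closedBall 0 1 := by
    ext ⟨x, y⟩
    simp only [Set.mem_preimage, Set.mem_prod, mem_closedBall_zero_iff]
    refine and_congr_left fun hy => ⟨fun h => ?_, fun h => ?_⟩
    · simpa using (IsUltrametricDist.norm_add_le_max (x - y) y).trans (max_le h hy)
    · simpa [sub_eq_add_neg] using
        (IsUltrametricDist.norm_add_le_max x (-y)).trans (max_le h (by simpa using hy))
  have hshear := (measurePreserving_sub_prod μ μ).restrict_preimage
    (s := Metric.closedBall 0 1 ×ˢ Metric.closedBall 0 1)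
    (measurableSet_closedBall.prod measurableSet_closedBall)
  rw [hpre] at hshear
  exact hshear.integrable_comp_of_integrable
    (hμ.integrableOn_norm_fst_rpow_mul_norm_snd_rpow hα hβ)

end UpperRegularAtZero

end VolumeGrowth

lemma exists_rpow_mul_rpow_le {d α β : ℝ} (hα : -d < α) (hαβ : -(2 * d) < α + β) :
    ∃ α' β' : ℝ, -d < α' ∧ -d < β' ∧
      ∀ u w : ℝ, 0 < u → u ≤ w → u ^ α * w ^ β ≤ u ^ α' * w ^ β' := by
  obtain ⟨α', hdα', hα'⟩ := exists_between (lt_min hα (show -d < α + β + d by linarith))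
  obtain ⟨hα'α, hα'β⟩ := lt_min_iff.1 hα'
  refine ⟨α', α + β - α', hdα', by linarith, fun u w hu huw => ?_⟩
  have hw := hu.trans_le huw
  calc u ^ α * w ^ β = u ^ α' * u ^ (α - α') * w ^ β := by
        rw [← Real.rpow_add hu, add_sub_cancel]
    _ ≤ u ^ α' * w ^ (α - α') * w ^ β := by gcongr
    _ = u ^ α' * w ^ (α + β - α') := by
        rw [mul_assoc, ← Real.rpow_add hw]; ring_nf

lemma integrableOn_rpow_mul_rpow_of_le {Ω : Type*} [MeasurableSpace Ω] {μ : Measure Ω}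
    {S T : Set Ω} (hT : MeasurableSet T) (hTS : T ⊆ S) {u w : Ω → ℝ} (hu : Measurable u)
    (hw : Measurable w) (hpos : ∀ x ∈ T, 0 < u x) (hle : ∀ x ∈ T, u x ≤ w x) {d α β : ℝ}
    (hint : ∀ α' β', -d < α' → -d < β' → IntegrableOn (fun x => u x ^ α' * w x ^ β') S μ)
    (hα : -d < α) (hαβ : -(2 * d) < α + β) :
    IntegrableOn (fun x => u x ^ α * w x ^ β) T μ := by
  obtain ⟨α', β', hα', hβ', hbound⟩ := exists_rpow_mul_rpow_le hα hαβ
  refine Integrable.mono' ((hint α' β' hα' hβ').mono_set hTS)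
    (Measurable.aestronglyMeasurable (by fun_prop)) ?_
  filter_upwards [ae_restrict_mem hT] with x hx
  have hu₀ := hpos x hx
  have hw₀ := hu₀.trans_le (hle x hx)
  rw [Real.norm_of_nonneg (by positivity)]
  exact hbound _ _ hu₀ (hle x hx)

lemma norm_sub_eq_right_of_norm_lt {E : Type*} [SeminormedAddCommGroup E] [IsUltrametricDist E]
    {x y : E} (h : ‖x‖ < ‖y‖) : ‖x - y‖ = ‖y‖ := by
  rw [sub_eq_add_neg, IsUltrametricDist.norm_add_eq_max_of_norm_ne_norm (by simpa using h.ne),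
    norm_neg, max_eq_right h.le]

section FourPoint

variable {E : Type*} [NormedAddCommGroup E] {d : ℝ}

variable (E) in
/-- The integration domain of the four-point zeta function: the unit polydisc of `E × E` without
the lines `x = 0`, `y = 0` and `x = y`. -/
def fourPointDomain : Set (E × E) :=
  {x | ‖x.1‖ ≤ 1 ∧ ‖x.2‖ ≤ 1 ∧ x.1 ≠ 0 ∧ x.2 ≠ 0 ∧ x.1 ≠ x.2}

/-- The integrand `|x|^{s₁} |y|^{s₂} |x - y|^{s₃}` of the four-point zeta function, where `v` is
`(s₁, s₂, s₃)`. -/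
def fourPointIntegrand (v : Fin 3 → ℂ) : E × E → ℂ := fun x =>
  (‖x.1‖ : ℂ) ^ (v 0) * (‖x.2‖ : ℂ) ^ (v 1) * (‖x.1 - x.2‖ : ℂ) ^ (v 2)

/-- The region of convergence of the four-point zeta function of a measure that is upper regular of
dimension `d` at the origin. -/
def fourPointRegion (d : ℝ) : Set (Fin 3 → ℂ) :=
  {v | (∀ i, -d < (v i).re) ∧ -(2 * d) < (v 0).re + (v 1).re + (v 2).re}

lemma isOpen_fourPointRegion (d : ℝ) : IsOpen (fourPointRegion d) := by
  simp only [fourPointRegion, Set.ofPred_and, Set.ofPred_forall]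
  exact (isOpen_iInter_of_finite fun i => isOpen_lt (by fun_prop) (by fun_prop)).inter
    (isOpen_lt (by fun_prop) (by fun_prop))

lemma fourPointIntegrand_eq_prod (v : Fin 3 → ℂ) (x : E × E) :
    fourPointIntegrand v x = ∏ i, ((![‖x.1‖, ‖x.2‖, ‖x.1 - x.2‖] i : ℝ) : ℂ) ^ v i := by
  simp [fourPointIntegrand, Fin.prod_univ_three]

lemma forall_norm_pos_of_mem_fourPointDomain {x : E × E} (hx : x ∈ fourPointDomain E) (i : Fin 3) :
    0 < ![‖x.1‖, ‖x.2‖, ‖x.1 - x.2‖] i := by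
  obtain ⟨-, -, hx₁, hx₂, hne⟩ := hx
  fin_cases i <;> simpa [sub_eq_zero]

lemma norm_fourPointIntegrand (v : Fin 3 → ℂ) {x : E × E} (hx : x ∈ fourPointDomain E) :
    ‖fourPointIntegrand v x‖ =
      ‖x.1‖ ^ (v 0).re * ‖x.2‖ ^ (v 1).re * ‖x.1 - x.2‖ ^ (v 2).re := by
  obtain ⟨-, -, hx₁, hx₂, hne⟩ := hx
  rw [fourPointIntegrand, norm_mul, norm_mul,
    Complex.norm_cpow_eq_rpow_re_of_pos (norm_pos_iff.2 hx₁),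
    Complex.norm_cpow_eq_rpow_re_of_pos (norm_pos_iff.2 hx₂),
    Complex.norm_cpow_eq_rpow_re_of_pos (norm_sub_pos_iff.2 hne)]

lemma fourPointDomain_inter_subset {T : Set (E × E)} :
    fourPointDomain E ∩ T ⊆ Metric.closedBall 0 1 ×ˢ Metric.closedBall 0 1 := by
  rintro x ⟨⟨hx₁, hx₂, -⟩, -⟩
  exact ⟨mem_closedBall_zero_iff.2 hx₁, mem_closedBall_zero_iff.2 hx₂⟩

variable [MeasurableSpace E] [BorelSpace E] [SecondCountableTopology E]

lemma measurableSet_fourPointDomain : MeasurableSet (fourPointDomain E) :=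
  (measurableSet_le measurable_fst.norm measurable_const).inter <|
    (measurableSet_le measurable_snd.norm measurable_const).inter <|
      (measurableSet_eq_fun measurable_fst measurable_const).compl.inter <|
        (measurableSet_eq_fun measurable_snd measurable_const).compl.inter
          (measurableSet_eq_fun measurable_fst measurable_snd).compl

variable [IsUltrametricDist E] {μ : Measure E} [SFinite μ]

lemma UpperRegularAtZero.integrableOn_fourPoint_rpow_fst_lt_snd (hμ : UpperRegularAtZero μ d)
    {a b c : ℝ} (ha : -d < a) (habc : -(2 * d) < a + (b + c)) :
    IntegrableOn (fun x : E × E => ‖x.1‖ ^ a * ‖x.2‖ ^ b * ‖x.1 - x.2‖ ^ c)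
      (fourPointDomain E ∩ {x | ‖x.1‖ < ‖x.2‖}) (μ.prod μ) := by
  have hmeas : MeasurableSet (fourPointDomain E ∩ {x | ‖x.1‖ < ‖x.2‖}) :=
    measurableSet_fourPointDomain.inter (measurableSet_lt measurable_fst.norm measurable_snd.norm)
  refine (integrableOn_rpow_mul_rpow_of_le hmeas fourPointDomain_inter_subset measurable_fst.norm
    measurable_snd.norm (fun x hx => norm_pos_iff.2 hx.1.2.2.1) (fun x hx => hx.2.le)
    (fun _ _ => hμ.integrableOn_norm_fst_rpow_mul_norm_snd_rpow) ha habc).congr_fun ?_ hmeas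
  rintro x ⟨⟨-, -, -, hx₂, -⟩, hlt⟩
  simp only [norm_sub_eq_right_of_norm_lt hlt, Real.rpow_add (norm_pos_iff.2 hx₂), mul_assoc]

lemma UpperRegularAtZero.integrableOn_fourPoint_rpow_snd_lt_fst (hμ : UpperRegularAtZero μ d)
    {a b c : ℝ} (hb : -d < b) (habc : -(2 * d) < b + (a + c)) :
    IntegrableOn (fun x : E × E => ‖x.1‖ ^ a * ‖x.2‖ ^ b * ‖x.1 - x.2‖ ^ c)
      (fourPointDomain E ∩ {x | ‖x.2‖ < ‖x.1‖}) (μ.prod μ) := by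
  have hmeas : MeasurableSet (fourPointDomain E ∩ {x | ‖x.2‖ < ‖x.1‖}) :=
    measurableSet_fourPointDomain.inter (measurableSet_lt measurable_snd.norm measurable_fst.norm)
  refine (integrableOn_rpow_mul_rpow_of_le hmeas fourPointDomain_inter_subset measurable_snd.norm
    measurable_fst.norm (fun x hx => norm_pos_iff.2 hx.1.2.2.2.1) (fun x hx => hx.2.le)
    (fun α β hα hβ => ?_) hb habc).congr_fun ?_ hmeas
  · simpa only [mul_comm] using hμ.integrableOn_norm_fst_rpow_mul_norm_snd_rpow hβ hα
  · rintro x ⟨⟨-, -, hx₁, -⟩, hlt⟩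
    simp only [norm_sub_rev x.1, norm_sub_eq_right_of_norm_lt hlt,
      Real.rpow_add (norm_pos_iff.2 hx₁)]
    ring

variable [μ.IsAddRightInvariant]

lemma UpperRegularAtZero.integrableOn_fourPoint_rpow_fst_eq_snd (hμ : UpperRegularAtZero μ d)
    {a b c : ℝ} (hc : -d < c) (habc : -(2 * d) < c + (a + b)) :
    IntegrableOn (fun x : E × E => ‖x.1‖ ^ a * ‖x.2‖ ^ b * ‖x.1 - x.2‖ ^ c)
      (fourPointDomain E ∩ {x | ‖x.1‖ = ‖x.2‖}) (μ.prod μ) := by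
  have hmeas : MeasurableSet (fourPointDomain E ∩ {x | ‖x.1‖ = ‖x.2‖}) :=
    measurableSet_fourPointDomain.inter
      (measurableSet_eq_fun measurable_fst.norm measurable_snd.norm)
  refine (integrableOn_rpow_mul_rpow_of_le hmeas fourPointDomain_inter_subset
    (measurable_fst.sub measurable_snd).norm measurable_snd.norm
    (fun x hx => norm_sub_pos_iff.2 hx.1.2.2.2.2) (fun x hx => ?_)
    (fun _ _ => hμ.integrableOn_norm_sub_rpow_mul_norm_snd_rpow) hc habc).congr_fun ?_ hmeas
  · simpa [sub_eq_add_neg, hx.2.out] using IsUltrametricDist.norm_add_le_max x.1 (-x.2)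
  · rintro x ⟨⟨-, -, -, hx₂, -⟩, heq⟩
    simp only [Pi.sub_apply, heq.out, Real.rpow_add (norm_pos_iff.2 hx₂)]
    ring

lemma UpperRegularAtZero.integrableOn_fourPoint_rpow (hμ : UpperRegularAtZero μ d) {a b c : ℝ}
    (ha : -d < a) (hb : -d < b) (hc : -d < c) (habc : -(2 * d) < a + b + c) :
    IntegrableOn (fun x : E × E => ‖x.1‖ ^ a * ‖x.2‖ ^ b * ‖x.1 - x.2‖ ^ c)
      (fourPointDomain E) (μ.prod μ) := by
  have hcover : fourPointDomain E =
      fourPointDomain E ∩ {x | ‖x.1‖ < ‖x.2‖} ∪ fourPointDomain E ∩ {x | ‖x.2‖ < ‖x.1‖} ∪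
        fourPointDomain E ∩ {x | ‖x.1‖ = ‖x.2‖} := by
    ext x
    have := lt_trichotomy ‖x.1‖ ‖x.2‖
    simp only [Set.mem_union, Set.mem_inter_iff, Set.mem_ofPred_eq]
    tauto
  rw [hcover]
  exact (hμ.integrableOn_fourPoint_rpow_fst_lt_snd ha (by linarith) |>.union
    (hμ.integrableOn_fourPoint_rpow_snd_lt_fst hb (by linarith))).union
      (hμ.integrableOn_fourPoint_rpow_fst_eq_snd hc (by linarith))

lemma UpperRegularAtZero.integrableOn_fourPointIntegrand (hμ : UpperRegularAtZero μ d)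
    {v : Fin 3 → ℂ} (hv : v ∈ fourPointRegion d) :
    IntegrableOn (fourPointIntegrand v) (fourPointDomain E) (μ.prod μ) := by
  refine (hμ.integrableOn_fourPoint_rpow (hv.1 0) (hv.1 1) (hv.1 2) hv.2).mono'
    (Measurable.aestronglyMeasurable (by unfold fourPointIntegrand; fun_prop)) ?_
  filter_upwards [ae_restrict_mem measurableSet_fourPointDomain] with x hx
  exact (norm_fourPointIntegrand v hx).le

theorem fourPoint_zeta_holomorphic_general (hμ : UpperRegularAtZero μ d) :
    IsOpen (fourPointRegion d) ∧
    (∀ v ∈ fourPointRegion d,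
      IntegrableOn (fourPointIntegrand v) (fourPointDomain E) (μ.prod μ)) ∧
    DifferentiableOn ℂ (fun v => ∫ x in fourPointDomain E, fourPointIntegrand v x ∂(μ.prod μ))
      (fourPointRegion d) := by
  refine ⟨isOpen_fourPointRegion d, fun v => hμ.integrableOn_fourPointIntegrand, ?_⟩
  have hmeas (i : Fin 3) : Measurable fun x : E × E => ![‖x.1‖, ‖x.2‖, ‖x.1 - x.2‖] i := by
    fin_cases i
    exacts [measurable_fst.norm, measurable_snd.norm, (measurable_fst.sub measurable_snd).norm]
  have hpos : ∀ᵐ x ∂(μ.prod μ).restrict (fourPointDomain E), ∀ i,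
      0 < ![‖x.1‖, ‖x.2‖, ‖x.1 - x.2‖] i :=
    (ae_restrict_mem measurableSet_fourPointDomain).mono
      fun x => forall_norm_pos_of_mem_fourPointDomain
  simp only [fourPointIntegrand_eq_prod]
  refine differentiableOn_integral_prod_cpow (fun i => (hmeas i).aemeasurable) hpos
    (isOpen_fourPointRegion d) fun v hv => ?_
  simp only [← fourPointIntegrand_eq_prod]
  exact hμ.integrableOn_fourPointIntegrand hv

end FourPoint

section Padic

variable {p : ℕ} [Fact p.Prime]

lemma pairwiseDisjoint_closedBall_natCast (n : ℕ) :
    Set.PairwiseDisjoint ↑(range (p ^ n))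
      fun i : ℕ => Metric.closedBall (i : ℚ_[p]) ((p : ℝ) ^ (-n : ℤ)) := by
  intro i hi j hj hij
  refine Set.disjoint_left.2 fun t hti htj => hij ?_
  have hnorm : ‖((i - j : ℤ) : ℚ_[p])‖ ≤ (p : ℝ) ^ (-n : ℤ) := by
    push_cast
    rw [← dist_eq_norm]
    exact (dist_triangle_max (i : ℚ_[p]) t j).trans (max_le (Metric.mem_closedBall'.1 hti) htj)
  rw [Padic.norm_int_le_pow_iff_dvd] at hnorm
  have hmod : j ≡ i [MOD p ^ n] := Nat.modEq_iff_dvd.2 (by exact_mod_cast hnorm)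
  exact (hmod.eq_of_lt_of_lt (by simpa using hj) (by simpa using hi)).symm

variable (μ : Measure ℚ_[p]) [μ.IsAddHaarMeasure]

/- The translates of the ball of radius `p ^ (-n)` by `0, …, p ^ n - 1` are disjoint subsets of the
unit ball. -/
lemma measure_closedBall_zpow_le (n : ℕ) :
    μ (Metric.closedBall 0 ((p : ℝ) ^ (-n : ℤ))) ≤
      μ (Metric.closedBall 0 1) * ENNReal.ofReal ((p : ℝ) ^ (-n : ℤ)) := by
  have hp : 0 < (p : ℝ) := mod_cast (Fact.out : p.Prime).pos
  have hradius : (p : ℝ) ^ (-n : ℤ) ≤ 1 :=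
    zpow_le_one_of_nonpos₀ (mod_cast (Fact.out : p.Prime).one_le) (by simp)
  have hsub (i : ℕ) :
      Metric.closedBall (i : ℚ_[p]) ((p : ℝ) ^ (-n : ℤ)) ⊆ Metric.closedBall 0 1 := by
    refine (Metric.closedBall_subset_closedBall hradius).trans
      (IsUltrametricDist.closedBall_eq_of_mem ?_).ge
    simpa using Padic.norm_int_le_one (p := p) i
  have hofReal : ENNReal.ofReal ((p : ℝ) ^ (-n : ℤ)) = (p ^ n : ℝ≥0∞)⁻¹ := by
    rw [zpow_neg, zpow_natCast, ENNReal.ofReal_inv_of_pos (by positivity),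
      ENNReal.ofReal_pow hp.le, ENNReal.ofReal_natCast]
  rw [hofReal, ← div_eq_mul_inv, ENNReal.le_div_iff_mul_le
    (.inl (pow_ne_zero n (by exact_mod_cast hp.ne'))) (.inl (by simp))]
  calc μ (Metric.closedBall 0 ((p : ℝ) ^ (-n : ℤ))) * (p : ℝ≥0∞) ^ n
      = ∑ i ∈ range (p ^ n), μ (Metric.closedBall (i : ℚ_[p]) ((p : ℝ) ^ (-n : ℤ))) := by
        simp only [Measure.addHaar_closedBall_center, sum_const, card_range, nsmul_eq_mul,
          Nat.cast_pow, mul_comm]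
    _ = μ (⋃ i ∈ range (p ^ n), Metric.closedBall (i : ℚ_[p]) ((p : ℝ) ^ (-n : ℤ))) :=
        (measure_biUnion_finset (pairwiseDisjoint_closedBall_natCast n)
          fun _ _ => measurableSet_closedBall).symm
    _ ≤ μ (Metric.closedBall 0 1) := measure_mono (Set.iUnion₂_subset fun i _ => hsub i)

lemma upperRegularAtZero_padic : UpperRegularAtZero μ 1 := by
  refine ⟨(μ (Metric.closedBall 0 1)).toNNReal, fun r hr₀ hr₁ => ?_⟩
  rw [ENNReal.coe_toNNReal measure_closedBall_lt_top.ne, Real.rpow_one]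
  have hp : 1 < (p : ℝ) := mod_cast (Fact.out : p.Prime).one_lt
  obtain ⟨m, hmr, hrm⟩ := exists_mem_Ico_zpow hr₀ hp
  obtain ⟨n, rfl⟩ : ∃ n : ℕ, m = -n :=
    Int.exists_eq_neg_ofNat ((zpow_le_one_iff_right₀ hp).1 (hmr.trans hr₁))
  have hsub : Metric.closedBall (0 : ℚ_[p]) r ⊆ Metric.closedBall 0 ((p : ℝ) ^ (-n : ℤ)) := by
    intro t ht
    rw [mem_closedBall_zero_iff] at ht ⊢
    exact (Padic.norm_le_pow_iff_norm_lt_pow_add_one t _).2 (ht.trans_lt hrm)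
  calc μ (Metric.closedBall 0 r)
      ≤ μ (Metric.closedBall 0 ((p : ℝ) ^ (-n : ℤ))) := measure_mono hsub
    _ ≤ μ (Metric.closedBall 0 1) * ENNReal.ofReal ((p : ℝ) ^ (-n : ℤ)) :=
        measure_closedBall_zpow_le μ n
    _ ≤ μ (Metric.closedBall 0 1) * ENNReal.ofReal r := by gcongr

instance padicHaar_isAddHaarMeasure (p : ℕ) [Fact p.Prime] : (padicHaar p).IsAddHaarMeasure := by
  unfold padicHaar; infer_instance

end Padic

/-- The local zeta function `Z(s₁,s₂,s₃) = ∫_{ℤ_p² ∖ {xy(x-y)=0}} |x|^{s₁}|y|^{s₂}|x-y|^{s₃}`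
converges absolutely and is holomorphic on
`{Re sᵢ > -1 (i = 1,2,3)} ∩ {Re s₁ + Re s₂ + Re s₃ > -2}`. -/
theorem fourPoint_zeta_holomorphic (p : ℕ) [Fact p.Prime] :
    IsOpen {v : Fin 3 → ℂ | (∀ i, -1 < (v i).re) ∧ -2 < (v 0).re + (v 1).re + (v 2).re} ∧
    (∀ v : Fin 3 → ℂ,
      ((∀ i, -1 < (v i).re) ∧ -2 < (v 0).re + (v 1).re + (v 2).re) →
      IntegrableOn
        (fun x : ℚ_[p] × ℚ_[p] =>
          (‖x.1‖ : ℂ) ^ (v 0) * (‖x.2‖ : ℂ) ^ (v 1) * (‖x.1 - x.2‖ : ℂ) ^ (v 2))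
        {x : ℚ_[p] × ℚ_[p] | ‖x.1‖ ≤ 1 ∧ ‖x.2‖ ≤ 1 ∧ x.1 ≠ 0 ∧ x.2 ≠ 0 ∧ x.1 ≠ x.2}
        ((padicHaar p).prod (padicHaar p))) ∧
    DifferentiableOn ℂ
      (fun v : Fin 3 → ℂ =>
        ∫ x in {x : ℚ_[p] × ℚ_[p] | ‖x.1‖ ≤ 1 ∧ ‖x.2‖ ≤ 1 ∧ x.1 ≠ 0 ∧ x.2 ≠ 0 ∧ x.1 ≠ x.2},
          (‖x.1‖ : ℂ) ^ (v 0) * (‖x.2‖ : ℂ) ^ (v 1) * (‖x.1 - x.2‖ : ℂ) ^ (v 2)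
          ∂((padicHaar p).prod (padicHaar p)))
      {v : Fin 3 → ℂ | (∀ i, -1 < (v i).re) ∧ -2 < (v 0).re + (v 1).re + (v 2).re} := by
  have hzeta := fourPoint_zeta_holomorphic_general (upperRegularAtZero_padic (padicHaar p))
  simp only [fourPointRegion, mul_one] at hzeta
  exact hzeta
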